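/- For every integer n ≥ 1 there exist a polynomial p(q) with integer coefficients and polynomials p_h(q) with integer coefficients, one for each isomorphism class h of hyperfigurations on at most n points, such that for every prime power q, C_{n,4}(q) = p(q) + Σ_h p_h(q) · A_h(4,q), where the sum runs over all isomorphism classes h of hyperfigurations on at most n points. -/

import Mathlib

open scoped LinearAlgebra.Projectivization

/-- A planar space, encoded by its point set `P` (a finite set of natural numbers), its set
`L` of lines and its set `H` of planes: lines and planes are subsets of `P`, `(P, L)` is a
linear space (every line has at least 2 points and any two distinct points lie on exactly
one line), and any three distinct non-collinear points lie on a unique plane. -/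
def IsPlanarSpace (P : Finset ℕ) (L H : Finset (Finset ℕ)) : Prop :=
  (∀ l ∈ L, l ⊆ P ∧ 2 ≤ l.card) ∧
  (∀ h ∈ H, h ⊆ P) ∧
  (∀ a ∈ P, ∀ b ∈ P, a ≠ b → ∃! l, l ∈ L ∧ a ∈ l ∧ b ∈ l) ∧
  (∀ a ∈ P, ∀ b ∈ P, ∀ c ∈ P, a ≠ b → a ≠ c → b ≠ c →
    (¬ ∃ l ∈ L, a ∈ l ∧ b ∈ l ∧ c ∈ l) → ∃! h, h ∈ H ∧ a ∈ h ∧ b ∈ h ∧ c ∈ h)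

/-- The number of full planes (planes with at least 4 points) through a point. -/
def planeIndex (H : Finset (Finset ℕ)) (p : ℕ) : ℕ :=
  (H.filter fun h => p ∈ h ∧ 4 ≤ h.card).card

/-- The number of full lines (lines with at least 3 points) through a point. -/
def lineIndex (L : Finset (Finset ℕ)) (p : ℕ) : ℕ :=
  (L.filter fun l => p ∈ l ∧ 3 ≤ l.card).card

/-- A hyperfiguration: a planar space in which the index `(i, j)` of every point (where `i`
is the number of full planes and `j` the number of full lines through the point) satisfies
`i ≥ 4`, or `j ≥ 3`, or `(i, j) = (3, 0)`. -/
def IsHyperfiguration (P : Finset ℕ) (L H : Finset (Finset ℕ)) : Prop :=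
  IsPlanarSpace P L H ∧
    ∀ p ∈ P, 4 ≤ planeIndex H p ∨ 3 ≤ lineIndex L p ∨
      (planeIndex H p = 3 ∧ lineIndex L p = 0)

/-- Two planar spaces (given as triples of a point set, a line set and a plane set) are
isomorphic if there is a bijection of their point sets carrying lines to lines and planes
to planes. -/
def PSIso (s t : Finset ℕ × Finset (Finset ℕ) × Finset (Finset ℕ)) : Prop :=
  ∃ e : ℕ → ℕ, Set.BijOn e ↑s.1 ↑t.1 ∧ t.2.1 = s.2.1.image (Finset.image e) ∧
    t.2.2 = s.2.2.image (Finset.image e)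

/-- The span in `F^4` of the images under `σ` of the points of `Q`. -/
noncomputable def spanOf {F : Type} [Field F] {P : Finset ℕ}
    (σ : {x // x ∈ P} → ℙ F (Fin 4 → F)) (Q : Finset ℕ) : Submodule F (Fin 4 → F) :=
  ⨆ x : {x // x ∈ P}, ⨆ _ : (↑x ∈ Q), (σ x).submodule

/-- A strong realization of a planar space `(P, L, H)` in `ℙ³(F_q)`: an injective map
`σ : P → ℙ³(F_q)` such that a subset `Q ⊆ P` is contained in a line of the planar space iff
`σ(Q)` is contained in a line of `ℙ³(F_q)` (its representatives span a subspace of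
dimension at most 2), and `Q` is contained in a plane of the planar space iff `σ(Q)` is
contained in a plane of `ℙ³(F_q)` (its representatives span a subspace of dimension at
most 3). -/
def IsStrongReal3 (F : Type) [Field F] (P : Finset ℕ) (L H : Finset (Finset ℕ))
    (σ : {x // x ∈ P} → ℙ F (Fin 4 → F)) : Prop :=
  Function.Injective σ ∧
    ∀ Q : Finset ℕ, Q ⊆ P →
      ((∃ l ∈ L, Q ⊆ l) ↔ Module.finrank F (spanOf σ Q) ≤ 2) ∧
      ((∃ h ∈ H, Q ⊆ h) ↔ Module.finrank F (spanOf σ Q) ≤ 3)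

/-- Four points of `ℙ³(F_q)` are coplanar if vector representatives of them span a subspace
of `F_q^4` of dimension at most 3. -/
def Coplanar4 (F : Type) [Field F] (x y z w : ℙ F (Fin 4 → F)) : Prop :=
  Module.finrank F ↥(x.submodule ⊔ y.submodule ⊔ z.submodule ⊔ w.submodule) ≤ 3

/-- An ordered `n`-arc in `ℙ³(F_q)`. -/
def IsArc4 (F : Type) [Field F] {n : ℕ} (σ : Fin n → ℙ F (Fin 4 → F)) : Prop :=
  Function.Injective σ ∧
    ∀ a b c d : Fin n, a ≠ b → a ≠ c → a ≠ d → b ≠ c → b ≠ d → c ≠ d →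
      ¬ Coplanar4 F (σ a) (σ b) (σ c) (σ d)


noncomputable section

open Module

/-- span of the images of the points of a set -/
def spn {F : Type} [Field F] {ι : Type} (σ : ι → ℙ F (Fin 4 → F)) (Q : Set ι) :
    Submodule F (Fin 4 → F) :=
  ⨆ i ∈ Q, (σ i).submodule

section basics
variable {F : Type} [Field F] {ι : Type} (σ : ι → ℙ F (Fin 4 → F))

lemma spn_le_iff (Q : Set ι) (U : Submodule F (Fin 4 → F)) :
    spn σ Q ≤ U ↔ ∀ i ∈ Q, (σ i).submodule ≤ U := by
  simp [spn]

lemma le_spn {Q : Set ι} {i : ι} (h : i ∈ Q) : (σ i).submodule ≤ spn σ Q :=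
  (spn_le_iff σ Q _).1 le_rfl i h

lemma spn_mono {Q Q' : Set ι} (h : Q ⊆ Q') : spn σ Q ≤ spn σ Q' :=
  (spn_le_iff σ Q _).2 fun _ hi => le_spn σ (h hi)

lemma spn_union (Q Q' : Set ι) : spn σ (Q ∪ Q') = spn σ Q ⊔ spn σ Q' := by
  apply le_antisymm
  · rw [spn_le_iff]
    rintro i (h | h)
    · exact (le_spn σ h).trans le_sup_left
    · exact (le_spn σ h).trans le_sup_right
  · exact sup_le (spn_mono σ Set.subset_union_left) (spn_mono σ Set.subset_union_right)

lemma spn_empty : spn σ ∅ = ⊥ := by simp [spn]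

lemma spn_singleton (i : ι) : spn σ {i} = (σ i).submodule := by simp [spn]

lemma spn_insert (i : ι) (Q : Set ι) : spn σ (insert i Q) = (σ i).submodule ⊔ spn σ Q := by
  rw [Set.insert_eq, spn_union, spn_singleton]

lemma spn_comp {κ : Type} (f : κ → ι) (Q : Set κ) : spn (σ ∘ f) Q = spn σ (f '' Q) := by
  simp only [spn, iSup_image, Function.comp]

lemma finrank_le_four (U : Submodule F (Fin 4 → F)) : finrank F U ≤ 4 := by
  have := U.finrank_le
  simpa using this

lemma finrank_sup_point_le (x : ℙ F (Fin 4 → F)) (U : Submodule F (Fin 4 → F)) :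
    finrank F ↥(x.submodule ⊔ U) ≤ finrank F U + 1 := by
  have := Submodule.finrank_add_le_finrank_add_finrank x.submodule U
  rw [x.finrank_submodule] at this
  omega

lemma finrank_sup_eq_iff (U W : Submodule F (Fin 4 → F)) :
    finrank F ↥(U ⊔ W) = finrank F W ↔ U ≤ W := by
  constructor
  · intro h
    have := Submodule.eq_of_le_of_finrank_eq (le_sup_right : W ≤ U ⊔ W) h.symm
    rw [this]; exact le_sup_left
  · intro h
    rw [sup_eq_right.2 h]

lemma finrank_sup_point_of_not_le {x : ℙ F (Fin 4 → F)} {U : Submodule F (Fin 4 → F)}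
    (h : ¬ x.submodule ≤ U) : finrank F ↥(x.submodule ⊔ U) = finrank F U + 1 := by
  have h1 := finrank_sup_point_le x U
  have h2 : finrank F U ≤ finrank F ↥(x.submodule ⊔ U) := Submodule.finrank_mono le_sup_right
  have h3 := mt (finrank_sup_eq_iff x.submodule U).1 h
  omega

lemma point_le_point {x y : ℙ F (Fin 4 → F)} (h : x.submodule ≤ y.submodule) : x = y := by
  apply Projectivization.submodule_injective
  exact Submodule.eq_of_le_of_finrank_eq h (by simp [Projectivization.finrank_submodule])

/-- rank function -/
def rk (Q : Set ι) : Fin 5 :=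
  ⟨finrank F (spn σ Q), Nat.lt_succ_of_le (finrank_le_four _)⟩

@[simp] lemma rk_val (Q : Set ι) : (rk σ Q : ℕ) = finrank F (spn σ Q) := rfl

lemma rk_pair_iff (a b : ι) : (rk σ {a, b} : ℕ) ≤ 1 ↔ σ a = σ b := by
  rw [rk_val, spn_insert, spn_singleton]
  constructor
  · intro h
    by_contra hne
    have : ¬ (σ a).submodule ≤ (σ b).submodule := fun h => hne (point_le_point h)
    have := finrank_sup_point_of_not_le this
    rw [Projectivization.finrank_submodule] at this
    omega
  · intro h
    rw [h, sup_idem, Projectivization.finrank_submodule]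

lemma spn_le_spn_iff (Q Q' : Set ι) : spn σ Q ≤ spn σ Q' ↔ rk σ (Q ∪ Q') = rk σ Q' := by
  rw [← finrank_sup_eq_iff, Fin.ext_iff, rk_val, rk_val, spn_union]

lemma point_le_spn_iff (i : ι) (Q : Set ι) :
    (σ i).submodule ≤ spn σ Q ↔ rk σ (insert i Q) = rk σ Q := by
  rw [← finrank_sup_eq_iff, Fin.ext_iff, rk_val, rk_val, spn_insert]

lemma rk_comp {κ : Type} (f : κ → ι) (Q : Set κ) : rk (σ ∘ f) Q = rk σ (f '' Q) := by
  rw [Fin.ext_iff, rk_val, rk_val, spn_comp]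

/-- points in a subspace of dimension d -/
lemma card_points [Fintype F] (U : Submodule F (Fin 4 → F)) :
    Nat.card {x : ℙ F (Fin 4 → F) // x.submodule ≤ U} =
      ∑ k ∈ Finset.range (finrank F U), Fintype.card F ^ k := by
  rw [← Nat.card_eq_fintype_card, ← Projectivization.card_of_finrank F U rfl]
  symm
  have hinj : Function.Injective U.subtype := U.injective_subtype
  have hmem : ∀ y : ℙ F U, (Projectivization.map U.subtype hinj y).submodule ≤ U := by
    intro y
    induction y using Projectivization.ind with
    | h v hv =>
      rw [Projectivization.map_mk, Projectivization.submodule_mk,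
        Submodule.span_singleton_le_iff_mem]
      exact v.2
  refine Nat.card_congr (Equiv.ofBijective
    (fun y => ⟨Projectivization.map U.subtype hinj y, hmem y⟩) ⟨?_, ?_⟩)
  · intro y z h
    exact Projectivization.map_injective U.subtype hinj (Subtype.ext_iff.1 h)
  · rintro ⟨x, hx⟩
    induction x using Projectivization.ind with
    | h v hv =>
      rw [Projectivization.submodule_mk, Submodule.span_singleton_le_iff_mem] at hx
      refine ⟨Projectivization.mk F ⟨v, hx⟩ (fun h => hv (Subtype.ext_iff.1 h)), ?_⟩
      apply Subtype.ext
      simp [Projectivization.map_mk]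

end basics

/-- number of maps with given rank function -/
def cnt (ι : Type) (r : Set ι → Fin 5) (F : Type) [Field F] : ℕ :=
  Nat.card {σ : ι → ℙ F (Fin 4 → F) // rk σ = r}

/-- restriction of a rank function to the complement of a point -/
def restr {ι : Type} (p : ι) (r : Set ι → Fin 5) : Set {x : ι // x ≠ p} → Fin 5 :=
  fun Q => r (Subtype.val '' Q)

def Ksp {ι : Type} (p : ι) (r : Set ι → Fin 5) {F : Type} [Field F]
    (σ : {x : ι // x ≠ p} → ℙ F (Fin 4 → F)) : Submodule F (Fin 4 → F) :=
  ⨅ (Q : Set {x : ι // x ≠ p}) (_ : r (insert p (Subtype.val '' Q)) = r (Subtype.val '' Q)),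
    spn σ Q

lemma le_Ksp_iff {ι : Type} (p : ι) (r : Set ι → Fin 5) {F : Type} [Field F]
    (σ : {x : ι // x ≠ p} → ℙ F (Fin 4 → F)) (U : Submodule F (Fin 4 → F)) :
    U ≤ Ksp p r σ ↔ ∀ Q : Set {x : ι // x ≠ p},
      r (insert p (Subtype.val '' Q)) = r (Subtype.val '' Q) → U ≤ spn σ Q := by
  simp [Ksp]

/-- `r` comes from a configuration over some field -/
def Realized {ι : Type} (r : Set ι → Fin 5) : Prop :=
  ∃ (F : Type) (_ : Field F) (_ : Fintype F) (σ : ι → ℙ F (Fin 4 → F)), rk σ = r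

lemma weak_iff {ι : Type} (p : ι) (r : Set ι → Fin 5) (hr : Realized r) {F : Type} [Field F]
    (σ : ι → ℙ F (Fin 4 → F)) (hσ : restr p (rk σ) = restr p r) :
    rk σ ≤ r ↔ (σ p).submodule ≤ Ksp p r (fun x => σ x) := by
  obtain ⟨F0, _, _, τ, rfl⟩ := hr
  have hval : ∀ Q : Set {x : ι // x ≠ p}, rk σ (Subtype.val '' Q) = rk τ (Subtype.val '' Q) :=
    fun Q => congrFun hσ Q
  have hs : ∀ Q : Set {x : ι // x ≠ p}, spn (fun x : {x : ι // x ≠ p} => σ x) Q =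
      spn σ (Subtype.val '' Q) := fun Q => spn_comp σ Subtype.val Q
  have hdec : ∀ A : Set ι, ∃ Q : Set {x : ι // x ≠ p},
      A = Subtype.val '' Q ∨ A = insert p (Subtype.val '' Q) := by
    intro A
    refine ⟨Subtype.val ⁻¹' A, ?_⟩
    by_cases hp : p ∈ A
    · right
      ext x
      by_cases hx : x = p <;> simp [hx, hp]
    · left
      ext x
      by_cases hx : x = p <;> simp [hx, hp]
  rw [le_Ksp_iff]
  constructor
  · intro hle Q hQ
    rw [hs, point_le_spn_iff]
    apply le_antisymm
    · calc rk σ (insert p (Subtype.val '' Q)) ≤ _ := hle _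
        _ = _ := by rw [hQ, hval]
    · rw [Fin.le_def, rk_val, rk_val]
      exact Submodule.finrank_mono (spn_mono σ (Set.subset_insert _ _))
  · intro h A
    obtain ⟨Q, rfl | rfl⟩ := hdec A
    · exact (hval Q).le
    · by_cases hQ : rk τ (insert p (Subtype.val '' Q)) = rk τ (Subtype.val '' Q)
      · have := h Q hQ
        rw [hs, point_le_spn_iff] at this
        rw [this, hQ, hval]
      · have h1 := mt (point_le_spn_iff τ p _).1 hQ
        have h2 := finrank_sup_point_of_not_le h1
        rw [Fin.le_def, rk_val, rk_val, spn_insert, spn_insert, h2]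
        have h3 := Fin.ext_iff.1 (hval Q)
        rw [rk_val, rk_val] at h3
        rw [← h3]
        exact finrank_sup_point_le _ _

open Classical in
lemma step {ι : Type} [Fintype ι] (p : ι) (r : Set ι → Fin 5) (hr : Realized r) (d : ℕ)
    {F : Type} [Field F] [Fintype F]
    (hd : ∀ σ : {x : ι // x ≠ p} → ℙ F (Fin 4 → F), rk σ = restr p r →
      finrank F (Ksp p r σ) = d) :
    ∑ r' ∈ Finset.univ.filter (fun r' : Set ι → Fin 5 => r' ≤ r ∧ restr p r' = restr p r),
      cnt ι r' F = cnt {x : ι // x ≠ p} (restr p r) F *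
        ∑ k ∈ Finset.range d, Fintype.card F ^ k := by
  set T := Finset.univ.filter (fun r' : Set ι → Fin 5 => r' ≤ r ∧ restr p r' = restr p r)
    with hT
  have : Fintype (ℙ F (Fin 4 → F)) := Fintype.ofFinite _
  have h1 : ∑ r' ∈ T, cnt ι r' F = Nat.card {σ : ι → ℙ F (Fin 4 → F) // rk σ ∈ T} := by
    rw [Nat.card_eq_fintype_card, Fintype.card_subtype,
      Finset.card_eq_sum_card_fiberwise (f := rk) (t := T)]
    · apply Finset.sum_congr rfl
      intro r' hr'
      rw [cnt, Nat.card_eq_fintype_card, Fintype.card_subtype, Finset.filter_filter]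
      congr 1
      ext σ
      simp only [Finset.mem_filter, Finset.mem_univ, true_and]
      constructor
      · rintro rfl; exact ⟨hr', rfl⟩
      · exact fun h => h.2
    · intro σ hσ
      simpa using hσ
  rw [h1]
  let e : {σ : ι → ℙ F (Fin 4 → F) // rk σ ∈ T} ≃
      Σ σ : {σ : {x : ι // x ≠ p} → ℙ F (Fin 4 → F) // rk σ = restr p r},
        {x : ℙ F (Fin 4 → F) // x.submodule ≤ Ksp p r σ.1} :=
    { toFun := fun σ => ⟨⟨fun x => σ.1 x, by
          have h := (Finset.mem_filter.1 σ.2).2.2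
          rw [← h]
          funext Q
          exact rk_comp σ.1 Subtype.val Q⟩,
        ⟨σ.1 p, by
          have h := (Finset.mem_filter.1 σ.2).2
          exact (weak_iff p r hr σ.1 h.2).1 h.1⟩⟩
      invFun := fun s => ⟨fun x => if h : x = p then s.2.1 else s.1.1 ⟨x, h⟩, by
          have hc : (fun x : {x : ι // x ≠ p} => (fun x => if h : x = p then s.2.1 else
            s.1.1 ⟨x, h⟩ : ι → ℙ F (Fin 4 → F)) x) = s.1.1 := by
            funext x
            simp [x.2]
          have h0 : restr p (rk (fun x => if h : x = p then s.2.1 else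
            s.1.1 ⟨x, h⟩ : ι → ℙ F (Fin 4 → F))) = restr p r := by
            refine Eq.trans ?_ s.1.2
            funext Q
            exact (rk_comp _ Subtype.val Q).symm.trans (congrFun (congrArg rk hc) Q)
          refine Finset.mem_filter.2 ⟨Finset.mem_univ _, ?_, h0⟩
          rw [weak_iff p r hr _ h0, hc]
          simpa using s.2.2⟩
      left_inv := by
        rintro ⟨σ, hσ⟩
        apply Subtype.ext
        funext x
        by_cases h : x = p
        · subst h; simp
        · simp [h]
      right_inv := by
        rintro ⟨⟨σ, hσ⟩, ⟨x, hx⟩⟩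
        have hc : (fun y : {x : ι // x ≠ p} => (fun y => if h : y = p then x else
            σ ⟨y, h⟩ : ι → ℙ F (Fin 4 → F)) y) = σ := by
            funext y
            simp [y.2]
        refine Sigma.ext (Subtype.ext hc) ?_
        dsimp only
        refine (Subtype.heq_iff_coe_eq ?_).2 ?_
        · intro y
          simp only [hc]
        · simp }
  rw [Nat.card_congr e, Nat.card_sigma]
  have h2 : ∀ σ : {σ : {x : ι // x ≠ p} → ℙ F (Fin 4 → F) // rk σ = restr p r},
      Nat.card {x : ℙ F (Fin 4 → F) // x.submodule ≤ Ksp p r σ.1} =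
        ∑ k ∈ Finset.range d, Fintype.card F ^ k := by
    intro σ
    rw [card_points, hd _ σ.2]
  rw [Finset.sum_congr rfl (fun σ _ => h2 σ), Finset.sum_const, Finset.card_univ, cnt,
    Nat.card_eq_fintype_card, smul_eq_mul]

/-- the dominated case: the dimension of the admissible subspace is determined -/
lemma dominated {ι : Type} (p : ι) (r : Set ι → Fin 5)
    (Q1 Q2 : Set {x : ι // x ≠ p})
    (h1 : r (insert p (Subtype.val '' Q1)) = r (Subtype.val '' Q1))
    (h2 : r (insert p (Subtype.val '' Q2)) = r (Subtype.val '' Q2))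
    (h : ∀ Q : Set {x : ι // x ≠ p},
      r (insert p (Subtype.val '' Q)) = r (Subtype.val '' Q) →
        restr p r (Q1 ∪ Q) = restr p r Q ∨ restr p r (Q2 ∪ Q) = restr p r Q)
    {F : Type} [Field F] (σ : {x : ι // x ≠ p} → ℙ F (Fin 4 → F)) (hσ : rk σ = restr p r) :
    finrank F (Ksp p r σ) =
      (restr p r Q1 : ℕ) + restr p r Q2 - restr p r (Q1 ∪ Q2) := by
  have hK : Ksp p r σ = spn σ Q1 ⊓ spn σ Q2 := by
    apply le_antisymm
    · have := (le_Ksp_iff p r σ _).1 le_rfl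
      exact le_inf (this Q1 h1) (this Q2 h2)
    · rw [le_Ksp_iff]
      intro Q hQ
      rcases h Q hQ with h | h
      · rw [← hσ, ← spn_le_spn_iff] at h
        exact inf_le_left.trans h
      · rw [← hσ, ← spn_le_spn_iff] at h
        exact inf_le_right.trans h
  rw [hK, ← hσ, rk_val, rk_val, rk_val, spn_union]
  have := Submodule.finrank_sup_add_finrank_inf_eq (spn σ Q1) (spn σ Q2)
  omega

section geometry
variable {F : Type} [Field F] {P : Finset ℕ} (τ : {x // x ∈ P} → ℙ F (Fin 4 → F))

lemma spanOf_eq (Q : Finset ℕ) : spanOf τ Q = spn τ {x | (x : ℕ) ∈ Q} := rfl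

open Classical in
/-- labels of the points in a subspace -/
def cl (U : Submodule F (Fin 4 → F)) : Finset ℕ :=
  (P.attach.filter fun x => (τ x).submodule ≤ U).image Subtype.val

lemma mem_cl (U : Submodule F (Fin 4 → F)) (m : ℕ) :
    m ∈ cl τ U ↔ ∃ h : m ∈ P, (τ ⟨m, h⟩).submodule ≤ U := by
  simp [cl]

lemma coe_mem_cl (U : Submodule F (Fin 4 → F)) (x : {x // x ∈ P}) :
    (x : ℕ) ∈ cl τ U ↔ (τ x).submodule ≤ U := by
  simp [mem_cl, x.2]

lemma cl_subset (U : Submodule F (Fin 4 → F)) : cl τ U ⊆ P := by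
  intro m hm
  exact ((mem_cl τ U m).1 hm).1

lemma spn_cl (Q : Set {x // x ∈ P}) : spn τ {x | (x : ℕ) ∈ cl τ (spn τ Q)} = spn τ Q := by
  apply le_antisymm
  · rw [spn_le_iff]
    intro i hi
    exact (coe_mem_cl τ _ i).1 hi
  · apply spn_mono
    intro i hi
    exact (coe_mem_cl τ _ i).2 (le_spn τ hi)

open Classical in
/-- the flats of rank `k` -/
def geo (k : ℕ) : Finset (Finset ℕ) :=
  ((Finset.univ : Finset (Set {x // x ∈ P})).filter fun Q => finrank F (spn τ Q) = k).image
    fun Q => cl τ (spn τ Q)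

lemma mem_geo (k : ℕ) (l : Finset ℕ) :
    l ∈ geo τ k ↔ ∃ Q : Set {x // x ∈ P}, finrank F (spn τ Q) = k ∧ cl τ (spn τ Q) = l := by
  simp [geo]

lemma finrank_spn_le_card (S : Finset {x // x ∈ P}) : finrank F (spn τ (S : Set _)) ≤ S.card := by
  classical
  induction S using Finset.induction_on with
  | empty => simp [spn_empty]
  | insert a S ha ih =>
    rw [Finset.coe_insert, spn_insert, Finset.card_insert_of_notMem ha]
    have := finrank_sup_point_le (τ a) (spn τ (S : Set _))
    omega

lemma finrank_le_card_of_subset (Q : Set {x // x ∈ P}) (l : Finset ℕ)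
    (h : ∀ x ∈ Q, (x : ℕ) ∈ l) : finrank F (spn τ Q) ≤ l.card := by
  classical
  let S : Finset {x // x ∈ P} := Finset.univ.filter fun x => (x : ℕ) ∈ l
  have h1 : spn τ Q ≤ spn τ (S : Set _) := spn_mono τ fun x hx => by simpa [S] using h x hx
  have h2 : S.card ≤ l.card := by
    apply Finset.card_le_card_of_injOn Subtype.val
    · intro x hx; simpa [S] using hx
    · exact Subtype.val_injective.injOn
  exact (Submodule.finrank_mono h1).trans ((finrank_spn_le_card τ S).trans h2)

/-- subspaces spanned by points other than `p` and containing `p` -/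
def KK (p : {x // x ∈ P}) (U : Submodule F (Fin 4 → F)) : Prop :=
  (τ p).submodule ≤ U ∧ ∃ Q : Set {x // x ∈ P}, p ∉ Q ∧ spn τ Q = U

variable {τ} {p : {x // x ∈ P}}

lemma KK.spn_cl {U : Submodule F (Fin 4 → F)} (h : KK τ p U) :
    spn τ {x | (x : ℕ) ∈ cl τ U} = U := by
  obtain ⟨_, Q, _, rfl⟩ := h
  exact _root_.spn_cl τ Q

lemma KK.cl_inj {U W : Submodule F (Fin 4 → F)} (h : KK τ p U) (h' : KK τ p W)
    (e : cl τ U = cl τ W) : U = W := by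
  rw [← h.spn_cl, ← h'.spn_cl, e]

lemma KK.card {U : Submodule F (Fin 4 → F)} (h : KK τ p U) :
    finrank F U + 1 ≤ (cl τ U).card := by
  obtain ⟨h1, Q, hQ, rfl⟩ := h
  have hp := (coe_mem_cl τ (spn τ Q) p).2 h1
  rw [← Finset.card_erase_add_one hp]
  apply Nat.succ_le_succ
  apply finrank_le_card_of_subset
  intro x hx
  refine Finset.mem_erase.2 ⟨?_, (coe_mem_cl τ _ x).2 (le_spn τ hx)⟩
  intro e
  exact hQ (Subtype.ext e ▸ hx)

lemma KK.mem_geo {U : Submodule F (Fin 4 → F)} (h : KK τ p U) :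
    cl τ U ∈ geo τ (finrank F U) := by
  obtain ⟨h1, Q, hQ, rfl⟩ := h
  exact (_root_.mem_geo τ _ _).2 ⟨Q, rfl, rfl⟩

lemma card_le_flats (k : ℕ) (S : Finset (Submodule F (Fin 4 → F)))
    (hS : ∀ U ∈ S, KK τ p U ∧ finrank F U = k) :
    S.card ≤ ((geo τ k).filter fun l => (p : ℕ) ∈ l ∧ k + 1 ≤ l.card).card := by
  apply Finset.card_le_card_of_injOn (cl τ)
  · intro U hU
    obtain ⟨h1, h2⟩ := hS U hU
    have := h1.card
    refine Finset.mem_filter.2 ⟨?_, (coe_mem_cl τ U p).2 h1.1, by omega⟩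
    rw [← h2]
    exact h1.mem_geo
  · intro U hU W hW e
    exact (hS U hU).1.cl_inj (hS W hW).1 e

lemma plane4 {U1 U2 U3 U4 : Submodule F (Fin 4 → F)}
    (h1 : KK τ p U1) (h2 : KK τ p U2) (h3 : KK τ p U3) (h4 : KK τ p U4)
    (r1 : finrank F U1 = 3) (r2 : finrank F U2 = 3) (r3 : finrank F U3 = 3)
    (r4 : finrank F U4 = 3) (n12 : U1 ≠ U2) (n13 : U1 ≠ U3) (n14 : U1 ≠ U4)
    (n23 : U2 ≠ U3) (n24 : U2 ≠ U4) (n34 : U3 ≠ U4) : 4 ≤ planeIndex (geo τ 3) p := by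
  classical
  have := card_le_flats (τ := τ) (p := p) 3 {U1, U2, U3, U4} (by
    simp only [Finset.mem_insert, Finset.mem_singleton]
    rintro U (rfl | rfl | rfl | rfl) <;> exact ⟨by assumption, by assumption⟩)
  rw [Finset.card_insert_of_notMem (by simp [n12, n13, n14]),
    Finset.card_insert_of_notMem (by simp [n23, n24]), Finset.card_pair n34] at this
  exact this

lemma plane3 {U1 U2 U3 : Submodule F (Fin 4 → F)}
    (h1 : KK τ p U1) (h2 : KK τ p U2) (h3 : KK τ p U3)
    (r1 : finrank F U1 = 3) (r2 : finrank F U2 = 3) (r3 : finrank F U3 = 3)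
    (n12 : U1 ≠ U2) (n13 : U1 ≠ U3) (n23 : U2 ≠ U3) : 3 ≤ planeIndex (geo τ 3) p := by
  classical
  have := card_le_flats (τ := τ) (p := p) 3 {U1, U2, U3} (by
    simp only [Finset.mem_insert, Finset.mem_singleton]
    rintro U (rfl | rfl | rfl) <;> exact ⟨by assumption, by assumption⟩)
  rw [Finset.card_insert_of_notMem (by simp [n12, n13]), Finset.card_pair n23] at this
  exact this

lemma line3 {U1 U2 U3 : Submodule F (Fin 4 → F)}
    (h1 : KK τ p U1) (h2 : KK τ p U2) (h3 : KK τ p U3)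
    (r1 : finrank F U1 = 2) (r2 : finrank F U2 = 2) (r3 : finrank F U3 = 2)
    (n12 : U1 ≠ U2) (n13 : U1 ≠ U3) (n23 : U2 ≠ U3) : 3 ≤ lineIndex (geo τ 2) p := by
  classical
  have := card_le_flats (τ := τ) (p := p) 2 {U1, U2, U3} (by
    simp only [Finset.mem_insert, Finset.mem_singleton]
    rintro U (rfl | rfl | rfl) <;> exact ⟨by assumption, by assumption⟩)
  rw [Finset.card_insert_of_notMem (by simp [n12, n13]), Finset.card_pair n23] at this
  exact this

lemma KK.sup_point {U : Submodule F (Fin 4 → F)} (h : KK τ p U) {a : {x // x ∈ P}}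
    (ha : ¬ (τ a).submodule ≤ U) :
    KK τ p ((τ a).submodule ⊔ U) ∧ finrank F ↥((τ a).submodule ⊔ U) = finrank F U + 1 := by
  refine ⟨⟨h.1.trans le_sup_right, ?_⟩, finrank_sup_point_of_not_le ha⟩
  obtain ⟨h1, Q, hQ, rfl⟩ := h
  refine ⟨insert a Q, ?_, spn_insert τ a Q⟩
  rintro (rfl | h)
  · exact ha h1
  · exact hQ h

lemma KK.sup {U W : Submodule F (Fin 4 → F)} (h : KK τ p U) (h' : KK τ p W) :
    KK τ p (U ⊔ W) := by
  obtain ⟨h1, Q, hQ, rfl⟩ := h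
  obtain ⟨h1', Q', hQ', rfl⟩ := h'
  refine ⟨h1.trans le_sup_left, Q ∪ Q', ?_, spn_union τ Q Q'⟩
  rintro (h | h)
  · exact hQ h
  · exact hQ' h

lemma KK.exists_not_le {h W : Submodule F (Fin 4 → F)} (hh : KK τ p h)
    (hle : ¬ h ≤ W) : ∃ a, (τ a).submodule ≤ h ∧ ¬ (τ a).submodule ≤ W := by
  obtain ⟨h1, Q, hQ, rfl⟩ := hh
  rw [spn_le_iff] at hle
  push Not at hle
  obtain ⟨a, ha, ha'⟩ := hle
  exact ⟨a, le_spn τ ha, ha'⟩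

lemma eq_of_le_rank {U W : Submodule F (Fin 4 → F)} (h : U ≤ W) {k : ℕ}
    (h1 : finrank F U = k) (h2 : finrank F W = k) : U = W :=
  Submodule.eq_of_le_of_finrank_eq h (h1.trans h2.symm)

/-- one full line and two full planes not containing it -/
lemma one_line {l h1 h2 : Submodule F (Fin 4 → F)} (hl : KK τ p l) (hh1 : KK τ p h1)
    (hh2 : KK τ p h2) (rl : finrank F l = 2) (r1 : finrank F h1 = 3) (r2 : finrank F h2 = 3)
    (n1 : ¬ l ≤ h1) (n2 : ¬ l ≤ h2) (n12 : h1 ≠ h2) : 4 ≤ planeIndex (geo τ 3) p := by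
  obtain ⟨a, -, ha⟩ := hh1.exists_not_le (W := l) (fun h => by
    have := Submodule.finrank_mono h
    omega)
  obtain ⟨ka, ra⟩ := hl.sup_point ha
  obtain ⟨b, -, hb⟩ := hh1.exists_not_le (W := (τ a).submodule ⊔ l) (fun h => by
    have := eq_of_le_rank h r1 (by omega)
    exact n1 (this ▸ le_sup_right))
  obtain ⟨kb, rb⟩ := hl.sup_point (a := b) (fun h => hb (h.trans le_sup_right))
  refine plane4 ka kb hh1 hh2 (by omega) (by omega) r1 r2 ?_ ?_ ?_ ?_ ?_ n12
  · intro e; exact hb (e ▸ le_sup_left)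
  · intro e; exact n1 (e ▸ le_sup_right)
  · intro e; exact n2 (e ▸ le_sup_right)
  · intro e; exact n1 (e ▸ le_sup_right)
  · intro e; exact n2 (e ▸ le_sup_right)

/-- two full lines and a full plane not containing them -/
lemma two_line {l1 l2 h : Submodule F (Fin 4 → F)} (hl1 : KK τ p l1) (hl2 : KK τ p l2)
    (hh : KK τ p h) (r1 : finrank F l1 = 2) (r2 : finrank F l2 = 2) (rh : finrank F h = 3)
    (n1 : ¬ l1 ≤ h) (n2 : ¬ l2 ≤ h) (n12 : l1 ≠ l2) : 4 ≤ planeIndex (geo τ 3) p := by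
  have rπ : finrank F ↥(l1 ⊔ l2) = 3 := by
    have e := Submodule.finrank_sup_add_finrank_inf_eq l1 l2
    have h1 : 1 ≤ finrank F ↥(l1 ⊓ l2) := by
      rw [← Projectivization.finrank_submodule (τ p)]
      exact Submodule.finrank_mono (le_inf hl1.1 hl2.1)
    have h2 : finrank F ↥(l1 ⊔ l2) ≠ 2 := by
      intro h
      have e1 := eq_of_le_rank (le_sup_left : l1 ≤ l1 ⊔ l2) r1 h
      have e2 := eq_of_le_rank (le_sup_right : l2 ≤ l1 ⊔ l2) r2 h
      exact n12 (e1.trans e2.symm)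
    have h3 : 2 ≤ finrank F ↥(l1 ⊔ l2) := by
      rw [← r1]
      exact Submodule.finrank_mono le_sup_left
    omega
  have kπ := hl1.sup hl2
  obtain ⟨a, -, ha⟩ := hh.exists_not_le (W := l1 ⊔ l2) (fun h => by
    have := eq_of_le_rank h rh rπ
    exact n1 (this ▸ le_sup_left))
  obtain ⟨k1, s1⟩ := hl1.sup_point (a := a) (fun h => ha (h.trans le_sup_left))
  obtain ⟨k2, s2⟩ := hl2.sup_point (a := a) (fun h => ha (h.trans le_sup_right))
  refine plane4 kπ k1 k2 hh rπ (by omega) (by omega) rh ?_ ?_ ?_ ?_ ?_ ?_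
  · intro e; exact ha (e ▸ le_sup_left)
  · intro e; exact ha (e ▸ le_sup_left)
  · intro e; exact n1 (e ▸ le_sup_left)
  · intro e
    have h1 : l1 ⊔ l2 ≤ (τ a).submodule ⊔ l1 := by
      refine sup_le le_sup_right ?_
      rw [e]; exact le_sup_right
    have := eq_of_le_rank h1 rπ (by omega)
    exact ha (this ▸ le_sup_left)
  · intro e; exact n1 (e ▸ le_sup_right)
  · intro e; exact n2 (e ▸ le_sup_right)

lemma rank_pair (hτ : Function.Injective τ) {a b : {x // x ∈ P}} (h : a ≠ b) :
    finrank F (spn τ {a, b}) = 2 := by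
  have h1 := mt (rk_pair_iff τ a b).1 (fun e => h (hτ e))
  have h2 := finrank_sup_point_le (τ a) (τ b).submodule
  rw [rk_val] at h1
  rw [Projectivization.finrank_submodule, ← spn_singleton τ b, ← spn_insert] at h2
  omega

lemma exists_line (hτ : Function.Injective τ) (h : lineIndex (geo τ 2) p ≠ 0) :
    ∃ l, KK τ p l ∧ finrank F l = 2 := by
  rw [lineIndex, Finset.card_ne_zero] at h
  obtain ⟨l, hl⟩ := h
  obtain ⟨h1, h2, h3⟩ := Finset.mem_filter.1 hl
  obtain ⟨Q, hQ, rfl⟩ := (mem_geo τ _ _).1 h1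
  have h4 : 1 < ((cl τ (spn τ Q)).erase p).card := by
    rw [Finset.card_erase_of_mem h2]; omega
  obtain ⟨a, ha, b, hb, hab⟩ := Finset.one_lt_card.1 h4
  rw [Finset.mem_erase, mem_cl] at ha hb
  obtain ⟨ha, haP, ha'⟩ := ha
  obtain ⟨hb, hbP, hb'⟩ := hb
  have hr := rank_pair hτ (a := ⟨a, haP⟩) (b := ⟨b, hbP⟩) (fun e => hab (Subtype.ext_iff.1 e))
  have hle : spn τ {⟨a, haP⟩, ⟨b, hbP⟩} ≤ spn τ Q := by
    rw [spn_le_iff]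
    rintro i (rfl | rfl)
    · exact ha'
    · exact hb'
  have heq := eq_of_le_rank hle hr hQ
  refine ⟨spn τ Q, ⟨(coe_mem_cl τ _ p).1 h2, _, ?_, heq⟩, hQ⟩
  rintro (e | e)
  · exact ha (congrArg Subtype.val e).symm
  · exact hb (congrArg Subtype.val e).symm

lemma KK.two_le (hτ : Function.Injective τ) {U : Submodule F (Fin 4 → F)} (h : KK τ p U) :
    2 ≤ finrank F U := by
  have h1 := h.1
  by_contra hlt
  have h2 := Submodule.finrank_mono h1
  rw [Projectivization.finrank_submodule] at h2
  have h3 := eq_of_le_rank h1 (Projectivization.finrank_submodule _) (by omega)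
  obtain ⟨Q, hQ, rfl⟩ := h.2
  have : Q = ∅ := by
    ext a
    simp only [Set.mem_empty_iff_false, iff_false]
    intro ha
    have := le_spn τ ha
    rw [← h3] at this
    have := hτ (point_le_point this)
    exact hQ (this ▸ ha)
  rw [this, spn_empty, finrank_bot] at h2
  omega

lemma exists_minimal_KK {U : Submodule F (Fin 4 → F)} (h : KK τ p U) :
    ∃ M, M ≤ U ∧ KK τ p M ∧ ∀ W, KK τ p W → W ≤ M → W = M := by
  generalize hk : finrank F U = k
  induction k using Nat.strong_induction_on generalizing U with
  | _ k ih =>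
    by_cases hm : ∀ W, KK τ p W → W ≤ U → W = U
    · exact ⟨U, le_rfl, h, hm⟩
    · push Not at hm
      obtain ⟨W, hW, hle, hne⟩ := hm
      have hlt : finrank F W < finrank F U := Submodule.finrank_lt_finrank_of_lt (lt_of_le_of_ne hle hne)
      obtain ⟨M, h1, h2⟩ := ih _ (hk ▸ hlt) hW rfl
      exact ⟨M, h1.trans hle, h2⟩

theorem index_of_not_dominated (hτ : Function.Injective τ) (hne : ∃ U, KK τ p U)
    (hnd : ∀ U1 U2, KK τ p U1 → KK τ p U2 → ∃ U, KK τ p U ∧ ¬ U1 ≤ U ∧ ¬ U2 ≤ U) :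
    4 ≤ planeIndex (geo τ 3) p ∨ 3 ≤ lineIndex (geo τ 2) p ∨
      (planeIndex (geo τ 3) p = 3 ∧ lineIndex (geo τ 2) p = 0) := by
  obtain ⟨U, hU⟩ := hne
  obtain ⟨M1, -, k1, m1⟩ := exists_minimal_KK hU
  obtain ⟨U2, hU2, hn2, -⟩ := hnd M1 M1 k1 k1
  obtain ⟨M2, le2, k2, m2⟩ := exists_minimal_KK hU2
  obtain ⟨U3, hU3, hn3, hn3'⟩ := hnd M1 M2 k1 k2
  obtain ⟨M3, le3, k3, m3⟩ := exists_minimal_KK hU3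
  have n12 : ¬ M1 ≤ M2 := fun h => hn2 (h.trans le2)
  have n13 : ¬ M1 ≤ M3 := fun h => hn3 (h.trans le3)
  have n23 : ¬ M2 ≤ M3 := fun h => hn3' (h.trans le3)
  have n21 : ¬ M2 ≤ M1 := fun h => n12 (m1 _ k2 h).ge
  have n31 : ¬ M3 ≤ M1 := fun h => n13 (m1 _ k3 h).ge
  have n32 : ¬ M3 ≤ M2 := fun h => n23 (m2 _ k3 h).ge
  have d : ∀ A B : Submodule F (Fin 4 → F), KK τ p A → ¬ B ≤ A →
      finrank F A = 2 ∨ finrank F A = 3 := by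
    intro A B hA hB
    have h1 := hA.two_le hτ
    have h2 := finrank_le_four A
    have h3 : finrank F A ≠ 4 := by
      intro h
      have : A = ⊤ := Submodule.eq_top_of_finrank_eq (by simp [h])
      exact hB (this ▸ le_top)
    omega
  have e12 : M1 ≠ M2 := fun h => n12 h.le
  have e13 : M1 ≠ M3 := fun h => n13 h.le
  have e23 : M2 ≠ M3 := fun h => n23 h.le
  rcases d M1 M2 k1 n21 with d1 | d1 <;> rcases d M2 M1 k2 n12 with d2 | d2 <;>
    rcases d M3 M1 k3 n13 with d3 | d3
  · exact Or.inr (Or.inl (line3 k1 k2 k3 d1 d2 d3 e12 e13 e23))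
  · exact Or.inl (two_line k1 k2 k3 d1 d2 d3 n13 n23 e12)
  · exact Or.inl (two_line k1 k3 k2 d1 d3 d2 n12 n32 e13)
  · exact Or.inl (one_line k1 k2 k3 d1 d2 d3 n12 n13 e23)
  · exact Or.inl (two_line k2 k3 k1 d2 d3 d1 n21 n31 e23)
  · exact Or.inl (one_line k2 k1 k3 d2 d1 d3 n21 n23 e13)
  · exact Or.inl (one_line k3 k1 k2 d3 d1 d2 n31 n32 e12)
  · by_cases hl : lineIndex (geo τ 2) p = 0
    · have := plane3 k1 k2 k3 d1 d2 d3 e12 e13 e23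
      omega
    · obtain ⟨l, kl, dl⟩ := exists_line hτ hl
      refine Or.inl (one_line kl k1 k2 dl d1 d2 (fun h => ?_) (fun h => ?_) e12)
      · have := m1 l kl h
        rw [this] at dl; omega
      · have := m2 l kl h
        rw [this] at dl; omega

variable (τ)

lemma exists_extend (Q : Set {x // x ∈ P}) (k : ℕ) (h1 : finrank F (spn τ Q) ≤ k)
    (h2 : k ≤ finrank F (spn τ Set.univ)) : ∃ Q', Q ⊆ Q' ∧ finrank F (spn τ Q') = k := by
  obtain ⟨M, hM, hmax⟩ := Set.Finite.exists_le_maximal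
    (s := {A : Set {x // x ∈ P} | finrank F (spn τ A) ≤ k}) (Set.toFinite _) h1
  refine ⟨M, hM, le_antisymm hmax.1 ?_⟩
  by_contra hlt
  push Not at hlt
  have : M = Set.univ := by
    rw [Set.eq_univ_iff_forall]
    intro x
    refine hmax.2 (y := insert x M) ?_ (Set.subset_insert _ _) (Set.mem_insert _ _)
    have := finrank_sup_point_le (τ x) (spn τ M)
    rw [← spn_insert] at this
    change finrank F (spn τ (insert x M)) ≤ k
    omega
  rw [this] at hlt
  omega

lemma mem_cl_spn {Q : Set {x // x ∈ P}} {m : {x // x ∈ P}} (h : m ∈ Q) :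
    (m : ℕ) ∈ cl τ (spn τ Q) :=
  (coe_mem_cl τ _ _).2 (le_spn τ h)

lemma geo_mem {k : ℕ} {Q : Set {x // x ∈ P}} (h : finrank F (spn τ Q) = k) :
    cl τ (spn τ Q) ∈ geo τ k := (mem_geo τ _ _).2 ⟨Q, h, rfl⟩

lemma flat_unique (k : ℕ) (Q : Set {x // x ∈ P}) (h : finrank F (spn τ Q) = k)
    (l : Finset ℕ) (hl : l ∈ geo τ k) (hQ : ∀ x ∈ Q, (x : ℕ) ∈ l) : l = cl τ (spn τ Q) := by
  obtain ⟨A, hA, rfl⟩ := (mem_geo τ _ _).1 hl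
  have hle : spn τ Q ≤ spn τ A := by
    rw [spn_le_iff]
    intro i hi
    exact (coe_mem_cl τ _ i).1 (hQ i hi)
  rw [eq_of_le_rank hle h hA]

lemma line_unique (hτ : Function.Injective τ) (a b : {x // x ∈ P}) (hab : a ≠ b) :
    ∃! l, l ∈ geo τ 2 ∧ (a : ℕ) ∈ l ∧ (b : ℕ) ∈ l := by
  have hr := rank_pair hτ hab
  refine ⟨cl τ (spn τ {a, b}), ⟨geo_mem τ hr, mem_cl_spn τ (by simp), mem_cl_spn τ (by simp)⟩, ?_⟩
  rintro l ⟨hl, hal, hbl⟩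
  refine flat_unique τ 2 _ hr l hl ?_
  rintro i (rfl | rfl)
  · exact hal
  · exact hbl

lemma plane_unique (hτ : Function.Injective τ) (a b c : {x // x ∈ P}) (hab : a ≠ b)
    (hnl : ¬ ∃ l ∈ geo τ 2, (a : ℕ) ∈ l ∧ (b : ℕ) ∈ l ∧ (c : ℕ) ∈ l) :
    ∃! h, h ∈ geo τ 3 ∧ (a : ℕ) ∈ h ∧ (b : ℕ) ∈ h ∧ (c : ℕ) ∈ h := by
  have hr := rank_pair hτ hab
  have hr3 : finrank F (spn τ {c, a, b}) = 3 := by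
    rw [spn_insert, finrank_sup_point_of_not_le, hr]
    intro hle
    exact hnl ⟨cl τ (spn τ {a, b}), geo_mem τ hr, mem_cl_spn τ (by simp),
      mem_cl_spn τ (by simp), (coe_mem_cl τ _ _).2 hle⟩
  refine ⟨cl τ (spn τ {c, a, b}), ⟨geo_mem τ hr3, mem_cl_spn τ (by simp),
    mem_cl_spn τ (by simp), mem_cl_spn τ (by simp)⟩, ?_⟩
  rintro l ⟨hl, hal, hbl, hcl⟩
  refine flat_unique τ 3 _ hr3 l hl ?_
  rintro i (rfl | rfl | rfl)
  · exact hcl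
  · exact hal
  · exact hbl

lemma geo_planar (hτ : Function.Injective τ) : IsPlanarSpace P (geo τ 2) (geo τ 3) := by
  refine ⟨?_, ?_, ?_, ?_⟩
  · intro l hl
    obtain ⟨Q, hQ, rfl⟩ := (mem_geo τ _ _).1 hl
    refine ⟨cl_subset τ _, ?_⟩
    rw [← hQ]
    exact finrank_le_card_of_subset τ Q _ fun x hx => (coe_mem_cl τ _ x).2 (le_spn τ hx)
  · intro l hl
    obtain ⟨Q, hQ, rfl⟩ := (mem_geo τ _ _).1 hl
    exact cl_subset τ _
  · intro a ha b hb hab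
    exact line_unique τ hτ ⟨a, ha⟩ ⟨b, hb⟩ (fun e => hab (congrArg Subtype.val e))
  · intro a ha b hb c hc hab hac hbc hnl
    exact plane_unique τ hτ ⟨a, ha⟩ ⟨b, hb⟩ ⟨c, hc⟩ (fun e => hab (congrArg Subtype.val e)) hnl

lemma geo_contained (k : ℕ) (hk : k ≤ finrank F (spn τ Set.univ)) (Q : Finset ℕ) (hQ : Q ⊆ P) :
    (∃ l ∈ geo τ k, Q ⊆ l) ↔ finrank F (spanOf τ Q) ≤ k := by
  rw [spanOf_eq]
  constructor
  · rintro ⟨l, hl, hQl⟩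
    obtain ⟨A, rfl, rfl⟩ := (mem_geo τ _ _).1 hl
    apply Submodule.finrank_mono
    rw [spn_le_iff]
    intro i hi
    exact (coe_mem_cl τ _ i).1 (hQl hi)
  · intro h
    obtain ⟨A, hA, hr⟩ := exists_extend τ _ k h hk
    refine ⟨_, (mem_geo τ _ _).2 ⟨A, hr, rfl⟩, ?_⟩
    intro m hm
    exact (mem_cl τ _ _).2 ⟨hQ hm, le_spn τ (hA hm)⟩

lemma rank_univ_of_index
    (h : 4 ≤ planeIndex (geo τ 3) p ∨ 3 ≤ lineIndex (geo τ 2) p ∨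
      (planeIndex (geo τ 3) p = 3 ∧ lineIndex (geo τ 2) p = 0)) :
    3 ≤ finrank F (spn τ Set.univ) := by
  have key : planeIndex (geo τ 3) p ≠ 0 → 3 ≤ finrank F (spn τ Set.univ) := by
    intro h
    rw [planeIndex, Finset.card_ne_zero] at h
    obtain ⟨l, hl⟩ := h
    obtain ⟨Q, hQ, -⟩ := (mem_geo τ _ _).1 (Finset.mem_filter.1 hl).1
    rw [← hQ]
    exact Submodule.finrank_mono (spn_mono τ (Set.subset_univ _))
  rcases h with h | h | h
  · exact key (by omega)
  · rw [lineIndex] at h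
    obtain ⟨l1, h1, l2, h2, hne⟩ := Finset.one_lt_card.1 (lt_of_lt_of_le (by norm_num) h)
    obtain ⟨Q1, hQ1, rfl⟩ := (mem_geo τ _ _).1 (Finset.mem_filter.1 h1).1
    obtain ⟨Q2, hQ2, rfl⟩ := (mem_geo τ _ _).1 (Finset.mem_filter.1 h2).1
    have a1 : spn τ Q1 ≤ spn τ Set.univ := spn_mono τ (Set.subset_univ _)
    have a2 : spn τ Q2 ≤ spn τ Set.univ := spn_mono τ (Set.subset_univ _)
    have b1 := Submodule.finrank_mono a1
    by_contra hlt
    have e1 := eq_of_le_rank a1 hQ1 (by omega)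
    have e2 := eq_of_le_rank a2 hQ2 (by omega)
    exact hne (by rw [e1, e2])
  · exact key (by omega)

lemma geo_strong (hτ : Function.Injective τ) (h3 : 3 ≤ finrank F (spn τ Set.univ)) :
    IsStrongReal3 F P (geo τ 2) (geo τ 3) τ :=
  ⟨hτ, fun Q hQ => ⟨geo_contained τ 2 (by omega) Q hQ, geo_contained τ 3 h3 Q hQ⟩⟩

lemma strong_iff_rk {L H : Finset (Finset ℕ)} (hs : IsStrongReal3 F P L H τ)
    {F' : Type} [Field F'] (σ : {x // x ∈ P} → ℙ F' (Fin 4 → F')) :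
    IsStrongReal3 F' P L H σ ↔ rk σ = rk τ := by
  classical
  have inj_iff : ∀ {E : Type} [Field E] (ρ : {x // x ∈ P} → ℙ E (Fin 4 → E)),
      Function.Injective ρ ↔ ∀ a b, a ≠ b → ¬ (rk ρ {a, b} : ℕ) ≤ 1 := by
    intro E _ ρ
    simp only [rk_pair_iff]
    constructor
    · intro h a b hab e; exact hab (h e)
    · intro h a b e; by_contra hab; exact h a b hab e
  constructor
  · intro hσ
    funext Q
    let S : Finset ℕ := Finset.univ.filter (fun m : P => m ∈ Q) |>.image Subtype.val
    have hS : {x : {x // x ∈ P} | (x : ℕ) ∈ S} = Q := by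
      ext x; simp [S]
    have hSP : S ⊆ P := by
      intro m hm
      simp only [S, Finset.mem_image] at hm
      obtain ⟨x, _, rfl⟩ := hm
      exact x.2
    have t1 := hs.2 S hSP
    have s1 := hσ.2 S hSP
    rw [spanOf_eq, hS] at t1 s1
    have c2 := s1.1.symm.trans t1.1
    have c3 := s1.2.symm.trans t1.2
    have c1 : finrank F' (spn σ Q) ≤ 1 ↔ finrank F (spn τ Q) ≤ 1 := by
      have aux : ∀ {E : Type} [Field E] (ρ : {x // x ∈ P} → ℙ E (Fin 4 → E)),
          Function.Injective ρ → (finrank E (spn ρ Q) ≤ 1 ↔ Q.Subsingleton) := by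
        intro E _ ρ hρ
        constructor
        · intro h a ha b hb
          by_contra hab
          have := rank_pair hρ hab
          have h2 := Submodule.finrank_mono (spn_mono ρ (Q := {a, b}) (Q' := Q) (by
            rintro i (rfl | rfl) <;> assumption))
          omega
        · intro h
          rcases h.eq_empty_or_singleton with h0 | ⟨x, h0⟩
          · rw [h0, spn_empty, finrank_bot]; omega
          · rw [h0, spn_singleton, Projectivization.finrank_submodule]
      rw [aux σ hσ.1, aux τ hs.1]
    have c0 : finrank F' (spn σ Q) = 0 ↔ finrank F (spn τ Q) = 0 := by
      have aux : ∀ {E : Type} [Field E] (ρ : {x // x ∈ P} → ℙ E (Fin 4 → E)),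
          (finrank E (spn ρ Q) = 0 ↔ Q = ∅) := by
        intro E _ ρ
        constructor
        · intro h
          ext a
          simp only [Set.mem_empty_iff_false, iff_false]
          intro ha
          have := Submodule.finrank_mono (le_spn ρ ha)
          rw [Projectivization.finrank_submodule] at this
          omega
        · intro h0
          rw [h0, spn_empty, finrank_bot]
      rw [aux σ, aux τ]
    rw [Fin.ext_iff, rk_val, rk_val]
    have f1 := finrank_le_four (spn σ Q)
    have f2 := finrank_le_four (spn τ Q)
    omega
  · intro h
    have hfr : ∀ Q, finrank F' (spn σ Q) = finrank F (spn τ Q) := by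
      intro Q
      rw [← rk_val, ← rk_val, h]
    refine ⟨?_, ?_⟩
    · rw [inj_iff, h, ← inj_iff]; exact hs.1
    · intro Q hQ
      have := hs.2 Q hQ
      rw [spanOf_eq] at this ⊢
      rw [hfr]
      exact this

end geometry

/-- triples (points, lines, planes) -/
abbrev Triple := Finset ℕ × Finset (Finset ℕ) × Finset (Finset ℕ)

/-- lines and planes are sets of points -/
def Wf (s : Triple) : Prop := (∀ l ∈ s.2.1, l ⊆ s.1) ∧ (∀ l ∈ s.2.2, l ⊆ s.1)

/-- hyperfiguration triple -/
def Hyp (s : Triple) : Prop := IsHyperfiguration s.1 s.2.1 s.2.2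

lemma Hyp.wf {s : Triple} (h : Hyp s) : Wf s := ⟨fun l hl => (h.1.1 l hl).1, h.1.2.1⟩

lemma psiso_refl (s : Triple) : PSIso s s := by
  refine ⟨id, Set.bijOn_id _, ?_, ?_⟩ <;>
  · have : (Finset.image id : Finset ℕ → Finset ℕ) = id := by funext l; simp
    rw [this, Finset.image_id]

lemma image_image_inv {P : Finset ℕ} {L : Finset (Finset ℕ)} (h : ∀ l ∈ L, l ⊆ P) (e e' : ℕ → ℕ)
    (he : ∀ x ∈ P, e' (e x) = x) :
    (L.image (Finset.image e)).image (Finset.image e') = L := by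
  rw [Finset.image_image]
  have : ∀ l ∈ L, (Finset.image e' ∘ Finset.image e) l = id l := by
    intro l hl
    rw [Function.comp, Finset.image_image]
    have : ∀ x ∈ l, (e' ∘ e) x = id x := fun x hx => he x (h l hl hx)
    rw [Finset.image_congr (g := id) (fun x hx => this x hx), Finset.image_id, id]
  rw [Finset.image_congr (g := id) (fun l hl => this l hl), Finset.image_id]

lemma psiso_symm {s t : Triple} (hs : Wf s) (h : PSIso s t) : PSIso t s := by
  obtain ⟨e, he, h1, h2⟩ := h
  refine ⟨Function.invFunOn e s.1, Set.BijOn.symm he.invOn_invFunOn.symm he, ?_, ?_⟩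
  · rw [h1, image_image_inv hs.1]
    intro x hx
    exact he.invOn_invFunOn.1 hx
  · rw [h2, image_image_inv hs.2]
    intro x hx
    exact he.invOn_invFunOn.1 hx

lemma psiso_trans {s t u : Triple} (h : PSIso s t) (h' : PSIso t u) : PSIso s u := by
  obtain ⟨e, he, h1, h2⟩ := h
  obtain ⟨f, hf, h3, h4⟩ := h'
  have key : ∀ L : Finset (Finset ℕ), (L.image (Finset.image e)).image (Finset.image f) =
      L.image (Finset.image (f ∘ e)) := by
    intro L
    rw [Finset.image_image]
    congr 1
    funext l
    simp [Function.comp, Finset.image_image]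
  exact ⟨f ∘ e, hf.comp he, by rw [h3, h1, key], by rw [h4, h2, key]⟩

lemma psiso_card {s t : Triple} (h : PSIso s t) : s.1.card = t.1.card := by
  obtain ⟨e, he, -, -⟩ := h
  exact Finset.card_bij (fun x _ => e x) (fun x hx => he.mapsTo hx)
    (fun x hx y hy hxy => he.injOn hx hy hxy) (fun y hy => by
      obtain ⟨x, hx, hxy⟩ := he.surjOn hy
      exact ⟨x, hx, hxy⟩)

/-- strong realizations -/
def StrongCount (s : Triple) (F : Type) [Field F] : ℕ :=
  Nat.card {σ : {x // x ∈ s.1} → ℙ F (Fin 4 → F) // IsStrongReal3 F s.1 s.2.1 s.2.2 σ}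

lemma subset_transfer {s : Triple} {L : Finset (Finset ℕ)} (hL : ∀ l ∈ L, l ⊆ s.1) (e : ℕ → ℕ)
    (he : Set.InjOn e s.1) (Q : Finset ℕ) (hQ : Q ⊆ s.1) :
    (∃ l ∈ L, Q ⊆ l) ↔ ∃ l ∈ L.image (Finset.image e), Q.image e ⊆ l := by
  constructor
  · rintro ⟨l, hl, h⟩
    exact ⟨_, Finset.mem_image_of_mem _ hl, Finset.image_subset_image h⟩
  · rintro ⟨l', hl', h⟩
    obtain ⟨l, hl, rfl⟩ := Finset.mem_image.1 hl'
    refine ⟨l, hl, fun x hx => ?_⟩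
    obtain ⟨y, hy, hxy⟩ := Finset.mem_image.1 (h (Finset.mem_image_of_mem e hx))
    rwa [← he (hL l hl hy) (hQ hx) hxy]

lemma strongCount_le {s t : Triple} (hs : Wf s) (h : PSIso s t) (F : Type) [Field F] [Fintype F] :
    StrongCount t F ≤ StrongCount s F := by
  obtain ⟨e, he, h1, h2⟩ := h
  let E : {x // x ∈ s.1} → {x // x ∈ t.1} := fun x => ⟨e x, he.mapsTo x.2⟩
  have hEi : Function.Injective E := fun x y h =>
    Subtype.ext (he.injOn x.2 y.2 (congrArg Subtype.val h))
  have hEs : Function.Surjective E := by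
    rintro ⟨y, hy⟩
    obtain ⟨x, hx, hxy⟩ := he.surjOn hy
    exact ⟨⟨x, hx⟩, Subtype.ext hxy⟩
  have key : ∀ σ : {x // x ∈ t.1} → ℙ F (Fin 4 → F), IsStrongReal3 F t.1 t.2.1 t.2.2 σ →
      IsStrongReal3 F s.1 s.2.1 s.2.2 (σ ∘ E) := by
    intro σ hσ
    refine ⟨hσ.1.comp hEi, ?_⟩
    intro Q hQ
    have hQt : Q.image e ⊆ t.1 := by
      intro y hy
      obtain ⟨x, hx, rfl⟩ := Finset.mem_image.1 hy
      exact he.mapsTo (hQ hx)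
    have hsp : spanOf (σ ∘ E) Q = spanOf σ (Q.image e) := by
      rw [spanOf_eq, spanOf_eq, spn_comp]
      congr 1
      ext y
      constructor
      · rintro ⟨x, hx, rfl⟩
        exact Finset.mem_image_of_mem e hx
      · intro hy
        obtain ⟨x, hx, hxy⟩ := Finset.mem_image.1 hy
        exact ⟨⟨x, hQ hx⟩, hx, Subtype.ext hxy⟩
    have := hσ.2 _ hQt
    rw [hsp, subset_transfer hs.1 e he.injOn Q hQ, subset_transfer hs.2 e he.injOn Q hQ,
      ← h1, ← h2]
    exact this
  refine Nat.card_le_card_of_injective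
    (fun σ : {σ : {x // x ∈ t.1} → ℙ F (Fin 4 → F) // IsStrongReal3 F t.1 t.2.1 t.2.2 σ} =>
      (⟨σ.1 ∘ E, key σ.1 σ.2⟩ : {σ : {x // x ∈ s.1} → ℙ F (Fin 4 → F) //
        IsStrongReal3 F s.1 s.2.1 s.2.2 σ})) ?_
  intro σ σ' h
  apply Subtype.ext
  exact hEs.injective_comp_right (congrArg Subtype.val h)

lemma strongCount_eq {s t : Triple} (hs : Wf s) (ht : Wf t) (h : PSIso s t) (F : Type) [Field F]
    [Fintype F] : StrongCount s F = StrongCount t F :=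
  le_antisymm (strongCount_le ht (psiso_symm hs h) F) (strongCount_le hs h F)

/-- isomorphism of hyperfigurations -/
def hypSetoid : Setoid {s : Triple // Hyp s} where
  r s t := PSIso s.1 t.1
  iseqv := ⟨fun s => psiso_refl s.1, fun {s _} h => psiso_symm s.2.wf h,
    fun h h' => psiso_trans h h'⟩

def rep (s : {s : Triple // Hyp s}) : {s : Triple // Hyp s} :=
  Quotient.out (Quotient.mk hypSetoid s)

lemma rep_iso (s : {s : Triple // Hyp s}) : PSIso s.1 (rep s).1 :=
  psiso_symm (rep s).2.wf (Quotient.mk_out (s := hypSetoid) s)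

lemma rep_eq {s t : {s : Triple // Hyp s}} (h : PSIso s.1 t.1) : rep s = rep t := by
  rw [rep, rep, Quotient.sound (s := hypSetoid) h]

/-- the set of representatives -/
def repSet (n : ℕ) : Set Triple :=
  {t | ∃ s : {s : Triple // Hyp s}, s.1.1.card ≤ n ∧ t = (rep s).1}

lemma exists_standard (s : Triple) : ∃ t : Triple, PSIso s t ∧ t.1 = Finset.range s.1.card := by
  classical
  let E : {x // x ∈ s.1} ≃ {x // x ∈ Finset.range s.1.card} :=
    Finset.equivOfCardEq (by simp)
  let e : ℕ → ℕ := fun x => if h : x ∈ s.1 then E ⟨x, h⟩ else 0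
  have he : ∀ x (h : x ∈ s.1), e x = E ⟨x, h⟩ := fun x h => by simp [e, h]
  refine ⟨(Finset.range s.1.card, s.2.1.image (Finset.image e), s.2.2.image (Finset.image e)),
    ⟨e, ⟨?_, ?_, ?_⟩, rfl, rfl⟩, rfl⟩
  · intro x hx
    rw [he x hx]
    exact (E ⟨x, hx⟩).2
  · intro x hx y hy h
    rw [he x hx, he y hy] at h
    exact congrArg Subtype.val (E.injective (Subtype.ext h))
  · intro y hy
    refine ⟨E.symm ⟨y, hy⟩, (E.symm ⟨y, hy⟩).2, ?_⟩
    rw [he _ (E.symm ⟨y, hy⟩).2]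
    simp

lemma Wf.of_iso {s t : Triple} (hs : Wf s) (h : PSIso s t) : Wf t := by
  obtain ⟨e, he, h1, h2⟩ := h
  have key : ∀ l, l ⊆ s.1 → l.image e ⊆ t.1 := by
    intro l hl y hy
    obtain ⟨x, hx, rfl⟩ := Finset.mem_image.1 hy
    exact he.mapsTo (hl hx)
  constructor
  · rw [h1]
    intro l hl
    obtain ⟨l', hl', rfl⟩ := Finset.mem_image.1 hl
    exact key l' (hs.1 l' hl')
  · rw [h2]
    intro l hl
    obtain ⟨l', hl', rfl⟩ := Finset.mem_image.1 hl
    exact key l' (hs.2 l' hl')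

lemma repSet_finite (n : ℕ) : (repSet n).Finite := by
  classical
  choose g hg1 hg2 using exists_standard
  apply Set.Finite.of_finite_image (f := g)
  · let B := (Finset.range n).powerset
    refine Set.Finite.subset (Finset.finite_toSet
      (B ×ˢ B.powerset ×ˢ B.powerset)) ?_
    rintro _ ⟨t, ⟨s, hs, rfl⟩, rfl⟩
    have hc : (rep s).1.1.card ≤ n := by rw [← psiso_card (rep_iso s)]; exact hs
    have hP : (g (rep s).1).1 ⊆ Finset.range n := by
      rw [hg2]
      exact Finset.range_subset_range.2 hc
    have hw := (rep s).2.wf.of_iso (hg1 _)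
    simp only [Finset.coe_product, Set.mem_prod, Finset.mem_coe, B, Finset.mem_powerset]
    refine ⟨hP, ?_, ?_⟩
    · intro l hl
      exact Finset.mem_powerset.2 ((hw.1 l hl).trans hP)
    · intro l hl
      exact Finset.mem_powerset.2 ((hw.2 l hl).trans hP)
  · rintro _ ⟨s, hs, rfl⟩ _ ⟨s', hs', rfl⟩ h
    have h1 := hg1 (rep s).1
    rw [h] at h1
    have h2 := psiso_trans h1 (psiso_symm (rep s').2.wf (hg1 (rep s').1))
    have h3 := psiso_trans (rep_iso s) (psiso_trans h2 (psiso_symm s'.2.wf (rep_iso s')))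
    rw [rep_eq h3]

/-- the finite set of representatives -/
def RR (n : ℕ) : Finset Triple := (repSet_finite n).toFinset

lemma mem_RR (n : ℕ) (t : Triple) :
    t ∈ RR n ↔ ∃ s : {s : Triple // Hyp s}, s.1.1.card ≤ n ∧ t = (rep s).1 := by
  rw [RR, Set.Finite.mem_toFinset]; rfl

lemma RR_hyp (n : ℕ) : ∀ s ∈ RR n, IsHyperfiguration s.1 s.2.1 s.2.2 ∧ s.1.card ≤ n := by
  intro t ht
  obtain ⟨s, hs, rfl⟩ := (mem_RR n t).1 ht
  exact ⟨(rep s).2, by rw [← psiso_card (rep_iso s)]; exact hs⟩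

lemma RR_unique (n : ℕ) (P : Finset ℕ) (L H : Finset (Finset ℕ)) (h : IsHyperfiguration P L H)
    (hc : P.card ≤ n) : ∃! t, t ∈ RR n ∧ PSIso (P, L, H) t := by
  let s : {s : Triple // Hyp s} := ⟨(P, L, H), h⟩
  refine ⟨(rep s).1, ⟨(mem_RR n _).2 ⟨s, hc, rfl⟩, rep_iso s⟩, ?_⟩
  rintro t ⟨ht, hiso⟩
  obtain ⟨s', hs', rfl⟩ := (mem_RR n t).1 ht
  have : PSIso s.1 s'.1 := psiso_trans hiso (psiso_symm s'.2.wf (rep_iso s'))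
  rw [rep_eq this]

/-- functions of the required form -/
def Good (n : ℕ) (f : (F : Type) → [Field F] → [Fintype F] → ℤ) : Prop :=
  ∃ (p : Polynomial ℤ) (coef : Triple → Polynomial ℤ),
    ∀ (F : Type) [Field F] [Fintype F],
      f F = p.eval (Fintype.card F : ℤ) +
        ∑ s ∈ RR n, (coef s).eval (Fintype.card F : ℤ) * (StrongCount s F : ℤ)

lemma Good.poly (n : ℕ) (p : Polynomial ℤ) :
    Good n (fun F _ _ => p.eval (Fintype.card F : ℤ)) :=
  ⟨p, 0, fun F _ _ => by simp⟩

lemma Good.add {n : ℕ} {f g : (F : Type) → [Field F] → [Fintype F] → ℤ} (hf : Good n f)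
    (hg : Good n g) : Good n (fun F _ _ => f F + g F) := by
  obtain ⟨p, c, h⟩ := hf
  obtain ⟨p', c', h'⟩ := hg
  refine ⟨p + p', c + c', fun F _ _ => ?_⟩
  dsimp only
  rw [h, h']
  simp only [Polynomial.eval_add, Pi.add_apply, add_mul, Finset.sum_add_distrib]
  ring

lemma Good.mul {n : ℕ} {f : (F : Type) → [Field F] → [Fintype F] → ℤ} (hf : Good n f)
    (w : Polynomial ℤ) : Good n (fun F _ _ => w.eval (Fintype.card F : ℤ) * f F) := by
  obtain ⟨p, c, h⟩ := hf
  refine ⟨w * p, fun s => w * c s, fun F _ _ => ?_⟩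
  dsimp only
  rw [h]
  simp only [Polynomial.eval_mul, mul_add, Finset.mul_sum, mul_assoc]

lemma Good.congr {n : ℕ} {f g : (F : Type) → [Field F] → [Fintype F] → ℤ} (hf : Good n f)
    (h : ∀ (F : Type) [Field F] [Fintype F], g F = f F) : Good n g := by
  obtain ⟨p, c, h'⟩ := hf
  exact ⟨p, c, fun F _ _ => by rw [h, h']⟩

lemma Good.sub {n : ℕ} {f g : (F : Type) → [Field F] → [Fintype F] → ℤ} (hf : Good n f)
    (hg : Good n g) : Good n (fun F _ _ => f F - g F) :=
  (hf.add (hg.mul (-1))).congr fun F _ _ => by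
    simp only [Polynomial.eval_neg, Polynomial.eval_one]; ring

lemma Good.sum {n : ℕ} {κ : Type} (T : Finset κ)
    (f : κ → (F : Type) → [Field F] → [Fintype F] → ℤ) (h : ∀ i ∈ T, Good n (f i)) :
    Good n (fun F _ _ => ∑ i ∈ T, f i F) := by
  classical
  induction T using Finset.induction_on with
  | empty => exact (Good.poly n 0).congr fun F _ _ => by simp
  | insert a T ha ih =>
    refine ((h a (Finset.mem_insert_self _ _)).add
      (ih fun i hi => h i (Finset.mem_insert_of_mem hi))).congr fun F _ _ => ?_
    rw [Finset.sum_insert ha]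

lemma Good.hyp {n : ℕ} {s : Triple} (hs : Hyp s) (hc : s.1.card ≤ n) :
    Good n (fun F _ _ => (StrongCount s F : ℤ)) := by
  classical
  obtain ⟨t, ⟨ht, hiso⟩, -⟩ := RR_unique n s.1 s.2.1 s.2.2 hs hc
  refine ⟨0, fun u => if u = t then 1 else 0, fun F _ _ => ?_⟩
  rw [Finset.sum_eq_single t]
  · have : Hyp t := (RR_hyp n t ht).1
    have e := strongCount_eq hs.wf this.wf hiso F
    simp [e]
  · intro u _ hne
    simp [hne]
  · intro h; exact absurd ht h

lemma cnt_equiv {ι κ : Type} (e : ι ≃ κ) (r : Set ι → Fin 5) (F : Type) [Field F] :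
    cnt ι r F = cnt κ (fun Q => r (e.symm '' Q)) F := by
  refine Nat.card_congr ((e.arrowCongr (Equiv.refl _)).subtypeEquiv ?_)
  intro σ
  have hc : (e.arrowCongr (Equiv.refl (ℙ F (Fin 4 → F)))) σ = σ ∘ e.symm := rfl
  rw [hc]
  constructor
  · rintro rfl
    funext Q
    exact rk_comp σ e.symm Q
  · intro h
    funext Q
    have := congrFun h (e '' Q)
    rw [rk_comp] at this
    simpa [Set.image_image] using this

lemma cnt_eq_zero {ι : Type} {r : Set ι → Fin 5} (hr : ¬ Realized r) (F : Type) [Field F]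
    [Fintype F] : cnt ι r F = 0 := by
  rw [cnt]
  have : IsEmpty {σ : ι → ℙ F (Fin 4 → F) // rk σ = r} :=
    ⟨fun σ => hr ⟨F, inferInstance, inferInstance, σ.1, σ.2⟩⟩
  exact Nat.card_of_isEmpty

/-- the inductive step once the dimension of the admissible subspace is known -/
lemma good_of_dim {n : ℕ} {ι : Type} [Fintype ι] (p : ι) (r : Set ι → Fin 5) (hr : Realized r)
    (d : ℕ)
    (hd : ∀ (F : Type) [Field F] (σ : {x : ι // x ≠ p} → ℙ F (Fin 4 → F)),
      rk σ = restr p r → finrank F (Ksp p r σ) = d)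
    (h1 : Good n (fun F _ _ => (cnt {x : ι // x ≠ p} (restr p r) F : ℤ)))
    (h2 : ∀ r' : Set ι → Fin 5, r' ≤ r → r' ≠ r → Good n (fun F _ _ => (cnt ι r' F : ℤ))) :
    Good n (fun F _ _ => (cnt ι r F : ℤ)) := by
  classical
  let T := Finset.univ.filter (fun r' : Set ι → Fin 5 => r' ≤ r ∧ restr p r' = restr p r)
  have hT : r ∈ T := by simp [T]
  have g1 := h1.mul (∑ k ∈ Finset.range d, Polynomial.X ^ k)
  have g2 := Good.sum (n := n) (T.erase r) (fun r' F _ _ => (cnt ι r' F : ℤ)) (by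
    intro r' hr'
    rw [Finset.mem_erase, Finset.mem_filter] at hr'
    exact h2 r' hr'.2.2.1 hr'.1)
  refine (g1.sub g2).congr fun F _ _ => ?_
  have h := step p r hr d (F := F) (fun σ hσ => hd F σ hσ)
  rw [← Finset.add_sum_erase T _ hT] at h
  have h' := congrArg (Nat.cast : ℕ → ℤ) h
  push_cast at h'
  rw [Polynomial.eval_finsetSum]
  simp only [Polynomial.eval_pow, Polynomial.eval_X]
  linarith

lemma good_empty {n : ℕ} {ι : Type} [IsEmpty ι] (r : Set ι → Fin 5) (hr : Realized r) :
    Good n (fun F _ _ => (cnt ι r F : ℤ)) := by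
  obtain ⟨F0, _, _, τ, rfl⟩ := hr
  refine (Good.poly n 1).congr fun F _ _ => ?_
  have : ∀ σ : ι → ℙ F (Fin 4 → F), rk σ = rk τ := by
    intro σ
    funext Q
    have hQ : Q = ∅ := Subsingleton.elim _ _
    rw [hQ, Fin.ext_iff, rk_val, rk_val, spn_empty, spn_empty, finrank_bot, finrank_bot]
  have hc : cnt ι (rk τ) F = 1 := by
    rw [cnt, Nat.card_eq_one_iff_unique]
    exact ⟨⟨fun a b => Subtype.ext (Subsingleton.elim _ _)⟩, ⟨⟨isEmptyElim, this _⟩⟩⟩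
  simp [hc]

theorem good_P {n : ℕ} (P : Finset ℕ) (hP : P.card ≤ n)
    (IH : ∀ (ι : Type) [Fintype ι], Fintype.card ι < P.card → ∀ r : Set ι → Fin 5,
      Good n (fun F _ _ => (cnt ι r F : ℤ))) (r : Set {x // x ∈ P} → Fin 5) :
    Good n (fun F _ _ => (cnt {x // x ∈ P} r F : ℤ)) := by
  classical
  generalize hk : ∑ Q, (r Q : ℕ) = k
  induction k using Nat.strong_induction_on generalizing r with
  | _ k ih =>
  by_cases hr : Realized r
  swap
  · exact (Good.poly n 0).congr fun F _ _ => by simp [cnt_eq_zero hr]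
  have h2 : ∀ r' : Set {x // x ∈ P} → Fin 5, r' ≤ r → r' ≠ r →
      Good n (fun F _ _ => (cnt {x // x ∈ P} r' F : ℤ)) := by
    intro r' hle hne
    refine ih _ ?_ r' rfl
    rw [← hk]
    obtain ⟨Q, hQ⟩ := Function.ne_iff.1 hne
    exact Finset.sum_lt_sum (fun Q _ => hle Q)
      ⟨Q, Finset.mem_univ _, lt_of_le_of_ne (hle Q) (fun e => hQ (Fin.ext e))⟩
  have h1 : ∀ p : {x // x ∈ P}, Good n
      (fun F _ _ => (cnt {x : {x // x ∈ P} // x ≠ p} (restr p r) F : ℤ)) := by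
    intro p
    apply IH
    have : Fintype.card {x : {x // x ∈ P} // x ≠ p} < Fintype.card {x // x ∈ P} :=
      Fintype.card_subtype_lt (x := p) (by simp)
    simpa using this
  have fin : ∀ (p : {x // x ∈ P}) (d : ℕ),
      (∀ (F : Type) [Field F] (σ : {x : {x // x ∈ P} // x ≠ p} → ℙ F (Fin 4 → F)),
        rk σ = restr p r → finrank F (Ksp p r σ) = d) →
      Good n (fun F _ _ => (cnt {x // x ∈ P} r F : ℤ)) :=
    fun p d hd => good_of_dim p r hr d hd (h1 p) h2
  obtain ⟨F0, _, _, τ, hτr⟩ := id hr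
  by_cases hτ : Function.Injective τ
  swap
  · -- two equal points
    rw [Function.Injective] at hτ
    push Not at hτ
    obtain ⟨p, b, hpb, hne⟩ := hτ
    let B : Set {x : {x // x ∈ P} // x ≠ p} := {⟨b, hne.symm⟩}
    have hB : Subtype.val '' B = {b} := by simp [B]
    have hc : r (insert p (Subtype.val '' B)) = r (Subtype.val '' B) := by
      rw [← hτr, ← point_le_spn_iff, hB, spn_singleton, hpb]
    refine fin p _ fun F _ σ hσ => dominated p r B B hc hc ?_ σ hσ
    intro Q hQ
    left
    rw [← hτr, ← point_le_spn_iff] at hQ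
    rw [restr, restr, Set.image_union, ← hτr, ← spn_le_spn_iff, hB, spn_singleton, ← hpb]
    exact hQ
  by_cases hidx : ∀ p : {x // x ∈ P}, 4 ≤ planeIndex (geo τ 3) p ∨ 3 ≤ lineIndex (geo τ 2) p ∨
      (planeIndex (geo τ 3) p = 3 ∧ lineIndex (geo τ 2) p = 0)
  · -- hyperfiguration
    rcases isEmpty_or_nonempty {x // x ∈ P} with hE | ⟨⟨p⟩⟩
    · exact good_empty r hr
    have hs := geo_strong τ hτ (rank_univ_of_index τ (hidx p))
    have hh : Hyp (P, geo τ 2, geo τ 3) :=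
      ⟨geo_planar τ hτ, fun p hp => hidx ⟨p, hp⟩⟩
    refine (Good.hyp hh hP).congr fun F _ _ => ?_
    rw [Nat.cast_inj, cnt, StrongCount]
    refine Nat.card_congr (Equiv.subtypeEquivRight fun σ => ?_)
    rw [← hτr]
    exact (strong_iff_rk τ hs σ).symm
  · push Not at hidx
    obtain ⟨p, hp⟩ := hidx
    have hKK : ∀ Q : Set {x : {x // x ∈ P} // x ≠ p},
        r (insert p (Subtype.val '' Q)) = r (Subtype.val '' Q) →
          KK τ p (spn τ (Subtype.val '' Q)) := by
      intro Q hQ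
      rw [← hτr, ← point_le_spn_iff] at hQ
      exact ⟨hQ, _, by simp, rfl⟩
    have hKK' : ∀ U, KK τ p U → ∃ Q : Set {x : {x // x ∈ P} // x ≠ p},
        r (insert p (Subtype.val '' Q)) = r (Subtype.val '' Q) ∧
          spn τ (Subtype.val '' Q) = U := by
      rintro U ⟨hU, Q, hpQ, rfl⟩
      have : Subtype.val '' (Subtype.val ⁻¹' Q : Set {x : {x // x ∈ P} // x ≠ p}) = Q := by
        ext x
        constructor
        · rintro ⟨y, hy, rfl⟩
          exact hy
        · intro h
          exact ⟨⟨x, fun e => hpQ (e ▸ h)⟩, h, rfl⟩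
      refine ⟨Subtype.val ⁻¹' Q, ?_, by rw [this]⟩
      rw [this, ← hτr, ← point_le_spn_iff]
      exact hU
    by_cases hne : ∃ U, KK τ p U
    swap
    · refine fin p 4 fun F _ σ hσ => ?_
      have : Ksp p r σ = ⊤ := by
        rw [← top_le_iff, le_Ksp_iff]
        intro Q hQ
        exact absurd ⟨_, hKK Q hQ⟩ hne
      rw [this, finrank_top]
      simp
    by_cases hnd : ∀ U1 U2, KK τ p U1 → KK τ p U2 → ∃ U, KK τ p U ∧ ¬ U1 ≤ U ∧ ¬ U2 ≤ U
    · exfalso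
      have := index_of_not_dominated hτ hne hnd
      omega
    · push Not at hnd
      obtain ⟨U1, U2, k1, k2, hdom⟩ := hnd
      obtain ⟨Q1, hQ1, rfl⟩ := hKK' U1 k1
      obtain ⟨Q2, hQ2, rfl⟩ := hKK' U2 k2
      refine fin p _ fun F _ σ hσ => dominated p r Q1 Q2 hQ1 hQ2 ?_ σ hσ
      intro Q hQ
      have hQ' := hdom _ (hKK Q hQ)
      simp only [restr, Set.image_union, ← hτr, ← spn_le_spn_iff]
      by_cases hle : spn τ (Subtype.val '' Q1) ≤ spn τ (Subtype.val '' Q)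
      · exact Or.inl hle
      · exact Or.inr (hQ' hle)

theorem good_all {n : ℕ} (m : ℕ) (hm : m ≤ n) (ι : Type) [Fintype ι] (hι : Fintype.card ι = m)
    (r : Set ι → Fin 5) : Good n (fun F _ _ => (cnt ι r F : ℤ)) := by
  induction m using Nat.strong_induction_on generalizing ι with
  | _ m ih =>
    let e : ι ≃ {x // x ∈ Finset.range m} := Fintype.equivOfCardEq (by simp [hι])
    refine (good_P (n := n) (Finset.range m) (by simpa using hm) ?_
      (fun Q => r (e.symm '' Q))).congr fun F _ _ => by rw [cnt_equiv e r F]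
    intro κ _ hκ r'
    rw [Finset.card_range] at hκ
    exact ih _ hκ (by omega) κ rfl r'

lemma isArc4_iff {F : Type} [Field F] {n : ℕ} (σ : Fin n → ℙ F (Fin 4 → F)) :
    IsArc4 F σ ↔ (∀ a b : Fin n, a ≠ b → ¬ (rk σ {a, b} : ℕ) ≤ 1) ∧
      ∀ a b c d : Fin n, a ≠ b → a ≠ c → a ≠ d → b ≠ c → b ≠ d → c ≠ d →
        ¬ (rk σ {a, b, c, d} : ℕ) ≤ 3 := by
  have h4 : ∀ a b c d : Fin n, Coplanar4 F (σ a) (σ b) (σ c) (σ d) ↔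
      (rk σ {a, b, c, d} : ℕ) ≤ 3 := by
    intro a b c d
    rw [rk_val, spn_insert, spn_insert, spn_insert, spn_singleton, Coplanar4, sup_assoc, sup_assoc]
  simp only [IsArc4, h4, rk_pair_iff]
  refine and_congr_left fun _ => ?_
  constructor
  · intro h a b hab e; exact hab (h e)
  · intro h a b e; by_contra hab; exact h a b hab e

theorem good_arcs (n : ℕ) :
    Good n (fun F _ _ => (Nat.card {σ : Fin n → ℙ F (Fin 4 → F) // IsArc4 F σ} : ℤ)) := by
  classical
  let T : Finset (Set (Fin n) → Fin 5) := Finset.univ.filter fun r =>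
    (∀ a b : Fin n, a ≠ b → ¬ (r {a, b} : ℕ) ≤ 1) ∧
      ∀ a b c d : Fin n, a ≠ b → a ≠ c → a ≠ d → b ≠ c → b ≠ d → c ≠ d →
        ¬ (r {a, b, c, d} : ℕ) ≤ 3
  refine (Good.sum (n := n) T (fun r F _ _ => (cnt (Fin n) r F : ℤ)) (fun r _ =>
    good_all n le_rfl (Fin n) (by simp) r)).congr fun F _ _ => ?_
  have : Fintype (ℙ F (Fin 4 → F)) := Fintype.ofFinite _
  rw [← Nat.cast_sum, Nat.cast_inj, Nat.card_eq_fintype_card, Fintype.card_subtype,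
      Finset.card_eq_sum_card_fiberwise (f := rk) (t := T)]
  · apply Finset.sum_congr rfl
    intro r hr
    rw [cnt, Nat.card_eq_fintype_card, Fintype.card_subtype, Finset.filter_filter]
    congr 1
    ext σ
    simp only [Finset.mem_filter, Finset.mem_univ, true_and]
    constructor
    · exact fun h => h.2
    · intro h
      refine ⟨?_, h⟩
      rw [isArc4_iff, h]
      exact (Finset.mem_filter.1 hr).2
  · intro σ hσ
    have h := (Finset.mem_filter.1 hσ).2
    exact Finset.mem_filter.2 ⟨Finset.mem_univ _, (isArc4_iff σ).1 h⟩

end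

/-- For every `n ≥ 1` there are integer polynomials `p` and `p_h`, one for each isomorphism
class of hyperfigurations on at most `n` points (encoded by a finite set `R` of
representatives, one per isomorphism class, with coefficient polynomials `coef`), such that
for every prime power `q`, `C_{n,4}(q) = p(q) + ∑_h p_h(q) · A_h(4, q)`. -/
theorem count_arcs_P3 (n : ℕ) (hn : 1 ≤ n) :
    ∃ (p : Polynomial ℤ) (R : Finset (Finset ℕ × Finset (Finset ℕ) × Finset (Finset ℕ)))
      (coef : Finset ℕ × Finset (Finset ℕ) × Finset (Finset ℕ) → Polynomial ℤ),
      (∀ s ∈ R, IsHyperfiguration s.1 s.2.1 s.2.2 ∧ s.1.card ≤ n) ∧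
      (∀ P L H, IsHyperfiguration P L H → P.card ≤ n → ∃! t, t ∈ R ∧ PSIso (P, L, H) t) ∧
      ∀ (F : Type) [Field F] [Fintype F], ∀ q : ℕ, q = Fintype.card F →
        (Nat.card {σ : Fin n → ℙ F (Fin 4 → F) // IsArc4 F σ} : ℤ) =
          p.eval (q : ℤ) +
            ∑ s ∈ R, (coef s).eval (q : ℤ) *
              (Nat.card {σ : {x // x ∈ s.1} → ℙ F (Fin 4 → F) //
                IsStrongReal3 F s.1 s.2.1 s.2.2 σ} : ℤ) := by
  obtain ⟨p, coef, h⟩ := good_arcs n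
  refine ⟨p, RR n, coef, RR_hyp n, RR_unique n, ?_⟩
  rintro F _ _ q rfl
  exact h F
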